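/- arXiv:1104.5257 — 10 statements merged into one kernel-verified Lean document; each statement's English description precedes it below -/
import Mathlib

section
/- Let r be a binary relation on a set α and s a binary relation on a set β. There exists a homomorphism from r to s if and only if there exists a surjective homomorphism from the disjoint union r ⊎ s to s. -/
/-- The disjoint union of two binary relations, on the sum type. -/
def SumRel {α β : Type*} (r : α → α → Prop) (s : β → β → Prop) :
    α ⊕ β → α ⊕ β → Prop
  | Sum.inl x, Sum.inl y => r x y
  | Sum.inr x, Sum.inr y => s x y
  | _, _ => False

/-- There is a homomorphism from `r` to `s` iff there is a surjective homomorphism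
from the disjoint union `r ⊎ s` to `s`. -/
theorem hom_iff_surjHom_sumRel {α β : Type*} (r : α → α → Prop) (s : β → β → Prop) :
    (∃ f : α → β, ∀ x y, r x y → s (f x) (f y)) ↔
      (∃ g : α ⊕ β → β, Function.Surjective g ∧
        ∀ x y, SumRel r s x y → s (g x) (g y)) := by
  constructor
  · rintro ⟨f, hf⟩
    refine ⟨Sum.elim f id, fun b => ⟨Sum.inr b, rfl⟩, ?_⟩
    rintro (x | x) (y | y) h
    · exact hf x y h
    · exact h.elim
    · exact h.elim
    · exact h
  · rintro ⟨g, -, hg⟩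
    exact ⟨fun x => g (Sum.inl x), fun x y h => hg (Sum.inl x) (Sum.inl y) h⟩
end

section
/- Let r be a binary relation on a nonempty set α and s a binary relation on a set β that contains two distinct elements. There exists a homomorphism from r to s if and only if there exists a non-constant homomorphism from the disjoint union of r with the empty relation on a one-element set (an isolated loopless vertex) to s. -/
/-- For nonempty `α` and `β` with two distinct elements, there is a homomorphism
from `r` to `s` iff there is a non-constant homomorphism from `r ⊎ K₁`
(disjoint union with an isolated loopless vertex) to `s`. -/
theorem hom_iff_ntHom_sum_K1 {α β : Type*} [Nonempty α]
    (r : α → α → Prop) (s : β → β → Prop) (hβ : ∃ b b' : β, b ≠ b') :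
    (∃ f : α → β, ∀ x y, r x y → s (f x) (f y)) ↔
      (∃ g : α ⊕ Unit → β, (∃ u v : α ⊕ Unit, g u ≠ g v) ∧
        ∀ x y, SumRel r (fun _ _ : Unit => False) x y → s (g x) (g y)) := by
  constructor
  · rintro ⟨f, hf⟩
    obtain ⟨a⟩ := ‹Nonempty α›
    obtain ⟨c, hc⟩ : ∃ c, f a ≠ c := by
      obtain ⟨b, b', hb⟩ := hβ
      by_cases h : f a = b
      · exact ⟨b', h ▸ hb⟩
      · exact ⟨b, h⟩
    refine ⟨Sum.elim f (fun _ => c), ⟨Sum.inl a, Sum.inr (), hc⟩, ?_⟩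
    rintro (x | x) (y | y) h
    · exact hf x y h
    · exact h.elim
    · exact h.elim
    · exact h.elim
  · rintro ⟨g, -, hg⟩
    exact ⟨fun x => g (Sum.inl x), fun x y h => hg (Sum.inl x) (Sum.inl y) h⟩
end

section
/- Let G be a finite connected simple graph with at least 2 vertices. Then G is 3-colourable if and only if there exists a non-constant homomorphism from the adjacency relation of G to the disjoint union K3 ⊎ K1^ref. -/
/-- A finite connected graph with at least 2 vertices is 3-colourable iff there is a
non-constant homomorphism from its adjacency relation to `K₃ ⊎ K₁^ref`. -/
theorem colorable_iff_ntHom_K3_K1ref {V : Type*} [Fintype V] (G : SimpleGraph V)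
    (hconn : G.Connected) (hcard : 2 ≤ Fintype.card V) :
    G.Colorable 3 ↔
      (∃ f : V → (Fin 3) ⊕ Unit, (∃ x y : V, f x ≠ f y) ∧
        ∀ x y, G.Adj x y →
          SumRel (fun i j : Fin 3 => i ≠ j) (fun _ _ : Unit => True) (f x) (f y)) := by
  constructor
  · rintro ⟨c⟩
    refine ⟨fun v => Sum.inl (c v), ?_, fun x y h => c.valid h⟩
    haveI : Nontrivial V := Fintype.one_lt_card_iff_nontrivial.mp hcard
    obtain ⟨x⟩ := hconn.nonempty
    obtain ⟨y, hy⟩ := hconn.preconnected.exists_adj_of_nontrivial x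
    exact ⟨x, y, fun h => c.valid hy (Sum.inl.inj h)⟩
  · rintro ⟨f, ⟨a, b, hab⟩, hf⟩
    have step : ∀ x y, G.Adj x y → (f x).isLeft = (f y).isLeft := by
      intro x y h
      have := hf x y h
      revert this
      cases f x <;> cases f y <;> simp [SumRel]
    have key : ∀ x y, (f x).isLeft = (f y).isLeft := by
      intro x y
      obtain ⟨w⟩ := hconn.preconnected x y
      induction w with
      | nil => rfl
      | cons h _ ih => exact (step _ _ h).trans ih
    have hl : ∀ x, (f x).isLeft = true := by
      intro x
      by_contra hx
      have h1 := key a x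
      have h2 := key b x
      apply hab
      revert h1 h2 hx
      cases f x <;> cases f a <;> cases f b <;> simp
    refine ⟨SimpleGraph.Coloring.mk (fun v => (f v).getLeft (hl v)) ?_⟩
    intro x y h e
    have h1 := hf x y h
    rw [← Sum.inl_getLeft (f x) (hl x), ← Sum.inl_getLeft (f y) (hl y)] at h1
    exact h1 e
end

section
/- Let G be a finite connected simple graph with at least 3 vertices. Then G is 3-colourable if and only if there exists a surjective homomorphism from the disjoint union of the adjacency relation of G with K1^ref to the disjoint union K3 ⊎ K1^ref. -/
theorem exists_surj_col {V : Type*} [Fintype V] (G : SimpleGraph V)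
    (hcard : 3 ≤ Fintype.card V) (hc : G.Colorable 3) :
    ∃ c : V → Fin 3, (∀ u v, G.Adj u v → c u ≠ c v) ∧ Function.Surjective c := by
  classical
  obtain ⟨c0⟩ := hc
  haveI : Nonempty {c : V → Fin 3 // ∀ u v, G.Adj u v → c u ≠ c v} :=
    ⟨⟨c0, fun u v h => c0.valid h⟩⟩
  obtain ⟨⟨c, hc⟩, hmax⟩ := Finite.exists_max
    (fun c : {c : V → Fin 3 // ∀ u v, G.Adj u v → c u ≠ c v} => (Finset.univ.image c.1).card)
  refine ⟨c, hc, ?_⟩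
  by_contra hs
  obtain ⟨a, ha⟩ := not_forall.mp hs
  have ha' : ∀ x, c x ≠ a := fun x hx => ha ⟨x, hx⟩
  have hni : ¬ Function.Injective c := by
    intro hi
    have hb : Function.Bijective c := (Fintype.bijective_iff_injective_and_card c).2
      ⟨hi, le_antisymm (Fintype.card_le_of_injective c hi) (by simpa using hcard)⟩
    exact hs hb.2
  simp only [Function.Injective, not_forall] at hni
  obtain ⟨u, v, huv, hne⟩ := hni
  have hd : ∀ x y, G.Adj x y → Function.update c u a x ≠ Function.update c u a y := by
    intro x y hxy
    by_cases hx : x = u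
    · subst hx
      have : y ≠ x := hxy.ne'
      simpa [Function.update_of_ne this] using (ha' y).symm
    · by_cases hy : y = u
      · subst hy
        simpa [Function.update_of_ne hx] using ha' x
      · simpa [Function.update_of_ne hx, Function.update_of_ne hy] using hc x y hxy
  have h1 := hmax ⟨_, hd⟩
  have h2 : insert a (Finset.univ.image c) ⊆ Finset.univ.image (Function.update c u a) := by
    intro b hb
    simp only [Finset.mem_insert, Finset.mem_image, Finset.mem_univ, true_and] at hb ⊢
    rcases hb with rfl | ⟨x, rfl⟩
    · exact ⟨u, by simp⟩
    · by_cases hx : x = u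
      · exact ⟨v, by rw [Function.update_of_ne (Ne.symm hne), hx, huv]⟩
      · exact ⟨x, by rw [Function.update_of_ne hx]⟩
  have h3 := Finset.card_le_card h2
  rw [Finset.card_insert_of_notMem (by simpa using ha')] at h3
  simp only at h1
  omega

/-- A finite connected graph with at least 3 vertices is 3-colourable iff there is a
surjective homomorphism from `G ⊎ K₁^ref` to `K₃ ⊎ K₁^ref`. -/
theorem colorable_iff_sHom_K3_K1ref {V : Type*} [Fintype V] (G : SimpleGraph V)
    (hconn : G.Connected) (hcard : 3 ≤ Fintype.card V) :
    G.Colorable 3 ↔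
      (∃ f : V ⊕ Unit → (Fin 3) ⊕ Unit, Function.Surjective f ∧
        ∀ x y, SumRel G.Adj (fun _ _ : Unit => True) x y →
          SumRel (fun i j : Fin 3 => i ≠ j) (fun _ _ : Unit => True) (f x) (f y)) := by
  constructor
  · intro h
    obtain ⟨c, hc, hs⟩ := exists_surj_col G hcard h
    refine ⟨Sum.map c id, Sum.map_surjective.2 ⟨hs, Function.surjective_id⟩, ?_⟩
    rintro (x | x) (y | y) hxy
    · exact hc x y hxy
    · exact hxy.elim
    · exact hxy.elim
    · trivial
  · rintro ⟨f, hs, hf⟩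
    have hr : f (Sum.inr ()) = Sum.inr () := by
      have := hf (Sum.inr ()) (Sum.inr ()) trivial
      rcases hh : f (Sum.inr ()) with i | i
      · rw [hh] at this
        exact (this rfl).elim
      · rfl
    have hstep : ∀ x y, G.Adj x y → (f (Sum.inl x)).isLeft = (f (Sum.inl y)).isLeft := by
      intro x y hxy
      have h := hf (Sum.inl x) (Sum.inl y) hxy
      rcases h1 : f (Sum.inl x) with i | i <;> rcases h2 : f (Sum.inl y) with j | j <;>
        rw [h1, h2] at h <;> first | rfl | exact h.elim
    have hwalk : ∀ x y, G.Walk x y → (f (Sum.inl x)).isLeft = (f (Sum.inl y)).isLeft := by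
      intro x y w
      induction w with
      | nil => rfl
      | cons h _ ih => exact (hstep _ _ h).trans ih
    obtain ⟨z, hz⟩ := hs (Sum.inl 0)
    rcases z with z | z
    · have hl : ∀ x, ∃ i, f (Sum.inl x) = Sum.inl i := by
        intro x
        obtain ⟨w⟩ := hconn.preconnected x z
        have := hwalk x z w
        rw [hz] at this
        exact Sum.isLeft_iff.1 this
      choose c hc using hl
      refine ⟨SimpleGraph.Coloring.mk c ?_⟩
      intro x y hxy
      have h := hf (Sum.inl x) (Sum.inl y) hxy
      rw [hc, hc] at h
      exact h
    · rw [hr] at hz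
      cases hz
end

section
/- Let G be a finite simple graph. There exists a surjective homomorphism from G to C4^ref if and only if G has a disconnected cut, i.e. there exists a set U of vertices with both U and its complement nonempty, such that the subgraph of G induced on U is not connected and the subgraph of G induced on the complement of U is not connected. -/
theorem not_conn_induce_iff {V : Type*} (G : SimpleGraph V) (U : Set V) (hU : U.Nonempty) :
    ¬ (G.induce U).Connected ↔ ∃ A : Set V, (∃ a ∈ U, a ∈ A) ∧ (∃ b ∈ U, b ∉ A) ∧
      ∀ x ∈ U, ∀ y ∈ U, G.Adj x y → x ∈ A → y ∈ A := by
  constructor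
  · intro h
    obtain ⟨u, hu⟩ := hU
    rw [SimpleGraph.connected_iff_exists_forall_reachable] at h
    push Not at h
    obtain ⟨⟨w, hw⟩, hr⟩ := h ⟨u, hu⟩
    refine ⟨{x | ∃ hx : x ∈ U, (G.induce U).Reachable ⟨u, hu⟩ ⟨x, hx⟩}, ⟨u, hu, hu, .rfl⟩,
      ⟨w, hw, fun ⟨_, h'⟩ => hr h'⟩, ?_⟩
    rintro x hx y hy hxy ⟨_, hr'⟩
    refine ⟨hy, hr'.trans (SimpleGraph.Adj.reachable ?_)⟩
    simpa using hxy
  · rintro ⟨A, ⟨a, ha, haA⟩, ⟨b, hb, hbA⟩, h⟩ hc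
    have hr := hc.preconnected ⟨a, ha⟩ ⟨b, hb⟩
    rw [SimpleGraph.reachable_iff_reflTransGen] at hr
    have key : ∀ z : U, Relation.ReflTransGen (G.induce U).Adj ⟨a, ha⟩ z → (z : V) ∈ A := by
      intro z hz
      induction hz with
      | refl => exact haA
      | tail _ h2 ih => exact h _ (Subtype.prop _) _ (Subtype.prop _) (by simpa using h2) ih
    exact hbA (key _ hr)

/-- A finite graph has a surjective homomorphism onto the reflexive 4-cycle `C₄^ref`
iff it has a disconnected cut: a set `U` of vertices, with `U` and its complement
nonempty, inducing a disconnected subgraph, whose complement also induces a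
disconnected subgraph. -/
theorem sHom_C4ref_iff_disconnected_cut {V : Type*} [Fintype V] (G : SimpleGraph V) :
    (∃ f : V → ZMod 4, Function.Surjective f ∧
        ∀ u v, G.Adj u v → (f u - f v = 1 ∨ f u - f v = 0 ∨ f u - f v = -1)) ↔
      (∃ U : Set V, U.Nonempty ∧ Uᶜ.Nonempty ∧
        ¬ (G.induce U).Connected ∧ ¬ (G.induce Uᶜ).Connected) := by
  classical
  constructor
  · rintro ⟨f, hf, hadj⟩
    obtain ⟨a, ha⟩ := hf 0
    obtain ⟨b, hb⟩ := hf 1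
    obtain ⟨c, hc⟩ := hf 2
    obtain ⟨d, hd⟩ := hf 3
    have e : ∀ p q : ZMod 4, (p - q = 1 ∨ p - q = 0 ∨ p - q = -1) →
      ((p = 0 ∨ p = 2) → (q = 0 ∨ q = 2) → p = 0 → q = 0) ∧
      (¬ (p = 0 ∨ p = 2) → ¬ (q = 0 ∨ q = 2) → p = 1 → q = 1) := by decide
    have n1 : ¬ ((1 : ZMod 4) = 0 ∨ (1 : ZMod 4) = 2) := by decide
    have n3 : ¬ ((3 : ZMod 4) = 0 ∨ (3 : ZMod 4) = 2) := by decide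
    have hU : ({x | f x = 0 ∨ f x = 2} : Set V).Nonempty := ⟨a, Or.inl ha⟩
    have hbU : b ∈ ({x | f x = 0 ∨ f x = 2} : Set V)ᶜ := by
      change ¬ (f b = 0 ∨ f b = 2); rw [hb]; exact n1
    have hdU : d ∈ ({x | f x = 0 ∨ f x = 2} : Set V)ᶜ := by
      change ¬ (f d = 0 ∨ f d = 2); rw [hd]; exact n3
    refine ⟨_, hU, ⟨b, hbU⟩, ?_, ?_⟩
    · rw [not_conn_induce_iff _ _ hU]
      refine ⟨{x | f x = 0}, ⟨a, Or.inl ha, ha⟩, ⟨c, Or.inr hc, ?_⟩, ?_⟩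
      · change ¬ (f c = 0); rw [hc]; decide
      · intro x hx y hy hxy h
        exact (e _ _ (hadj x y hxy)).1 hx hy h
    · rw [not_conn_induce_iff _ _ ⟨b, hbU⟩]
      refine ⟨{x | f x = 1}, ⟨b, hbU, hb⟩, ⟨d, hdU, ?_⟩, ?_⟩
      · change ¬ (f d = 1); rw [hd]; decide
      · intro x hx y hy hxy h
        exact (e _ _ (hadj x y hxy)).2 hx hy h
  · rintro ⟨U, hU, hU', h1, h2⟩
    rw [not_conn_induce_iff _ _ hU] at h1
    rw [not_conn_induce_iff _ _ hU'] at h2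
    obtain ⟨A, ⟨a, ha, haA⟩, ⟨c, hc, hcA⟩, hA⟩ := h1
    obtain ⟨B, ⟨b, hb, hbB⟩, ⟨d, hd, hdB⟩, hB⟩ := h2
    rw [Set.mem_compl_iff] at hb hd
    refine ⟨fun x => if x ∈ U then (if x ∈ A then 0 else 2) else (if x ∈ B then 1 else 3), ?_, ?_⟩
    · intro z
      have hz : z = 0 ∨ z = 1 ∨ z = 2 ∨ z = 3 := by revert z; decide
      rcases hz with rfl | rfl | rfl | rfl
      · exact ⟨a, by simp [ha, haA]⟩
      · exact ⟨b, by simp [hb, hbB]⟩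
      · exact ⟨c, by simp [hc, hcA]⟩
      · exact ⟨d, by simp [hd, hdB]⟩
    · intro u v huv
      have a1 := hA u
      have a2 := hA v
      have b1 := hB u
      have b2 := hB v
      have huv' := huv.symm
      by_cases h1 : u ∈ U <;> by_cases h2 : v ∈ U <;> by_cases h3 : u ∈ A <;>
        by_cases h4 : v ∈ A <;> by_cases h5 : u ∈ B <;> by_cases h6 : v ∈ B <;>
        simp only [h1, h2, h3, h4, h5, h6, if_true, if_false] <;>
        first
        | decide
        | exact absurd (hA u h1 v h2 huv h3) h4
        | exact absurd (hA v h2 u h1 huv' h4) h3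
        | exact absurd (hB u h1 v h2 huv h5) h6
        | exact absurd (hB v h2 u h1 huv' h6) h5
end

section
/- Let G be a finite simple graph. There exists a surjective homomorphism from G to C4^ref if and only if the complement graph of G admits a 2K2-partition: a partition of the vertex set into four nonempty classes A, B, C, D such that, in the complement of G, every vertex of A is adjacent to every vertex of B and every vertex of C is adjacent to every vertex of D. -/
/-- A finite graph has a surjective homomorphism onto the reflexive 4-cycle `C₄^ref`
iff its complement admits a `2K₂`-partition: a partition of the vertices into four
nonempty classes `A`, `B`, `C`, `D` such that, in the complement, every vertex of `A`
is adjacent to every vertex of `B` and every vertex of `C` is adjacent to every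
vertex of `D`. -/
theorem sHom_C4ref_iff_2K2_partition {V : Type*} [Fintype V] (G : SimpleGraph V) :
    (∃ f : V → ZMod 4, Function.Surjective f ∧
        ∀ u v, G.Adj u v → (f u - f v = 1 ∨ f u - f v = 0 ∨ f u - f v = -1)) ↔
      (∃ A B C D : Set V,
        A.Nonempty ∧ B.Nonempty ∧ C.Nonempty ∧ D.Nonempty ∧
        (∀ v : V, v ∈ A ∨ v ∈ B ∨ v ∈ C ∨ v ∈ D) ∧
        Disjoint A B ∧ Disjoint A C ∧ Disjoint A D ∧
        Disjoint B C ∧ Disjoint B D ∧ Disjoint C D ∧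
        (∀ a ∈ A, ∀ b ∈ B, Gᶜ.Adj a b) ∧
        (∀ c ∈ C, ∀ d ∈ D, Gᶜ.Adj c d)) := by
  classical
  constructor
  · rintro ⟨f, hs, hf⟩
    have dj : ∀ i j : ZMod 4, i ≠ j → Disjoint {v | f v = i} {v | f v = j} := by
      intro i j hij
      rw [Set.disjoint_left]
      intro v hi hj
      exact hij (hi.symm.trans hj)
    have key : ∀ x y : ZMod 4, (x = 0 ∧ y = 2) ∨ (x = 1 ∧ y = 3) →
        x ≠ y ∧ ¬ (x - y = 1 ∨ x - y = 0 ∨ x - y = -1) := by decide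
    have cv : ∀ x : ZMod 4, x = 0 ∨ x = 2 ∨ x = 1 ∨ x = 3 := by decide
    refine ⟨{v | f v = 0}, {v | f v = 2}, {v | f v = 1}, {v | f v = 3},
      hs 0, hs 2, hs 1, hs 3, fun v => cv (f v),
      dj _ _ (by decide), dj _ _ (by decide), dj _ _ (by decide),
      dj _ _ (by decide), dj _ _ (by decide), dj _ _ (by decide), ?_, ?_⟩
    · intro a ha b hb
      have k := key (f a) (f b) (Or.inl ⟨ha, hb⟩)
      rw [SimpleGraph.compl_adj]
      exact ⟨fun h => k.1 (congrArg f h), fun h => k.2 (hf a b h)⟩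
    · intro a ha b hb
      have k := key (f a) (f b) (Or.inr ⟨ha, hb⟩)
      rw [SimpleGraph.compl_adj]
      exact ⟨fun h => k.1 (congrArg f h), fun h => k.2 (hf a b h)⟩
  · rintro ⟨A, B, C, D, ⟨a, ha⟩, ⟨b, hb⟩, ⟨c, hc⟩, ⟨d, hd⟩, hcov,
      hAB, hAC, hAD, hBC, hBD, hCD, h1, h2⟩
    rw [Set.disjoint_left] at hAB hAC hAD hBC hBD hCD
    obtain ⟨f, hfA, hfB, hfC, hfD⟩ : ∃ f : V → ZMod 4, (∀ v ∈ A, f v = 0) ∧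
        (∀ v ∈ B, f v = 2) ∧ (∀ v ∈ C, f v = 1) ∧ (∀ v ∈ D, f v = 3) := by
      refine ⟨fun v => if v ∈ A then 0 else if v ∈ B then 2 else if v ∈ C then 1 else 3,
        ?_, ?_, ?_, ?_⟩ <;> intro v hv <;> grind
    have hn1 : ∀ u ∈ A, ∀ v ∈ B, ¬ G.Adj u v := fun u hu v hv =>
      ((SimpleGraph.compl_adj _ _ _).1 (h1 u hu v hv)).2
    have hn2 : ∀ u ∈ C, ∀ v ∈ D, ¬ G.Adj u v := fun u hu v hv =>
      ((SimpleGraph.compl_adj _ _ _).1 (h2 u hu v hv)).2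
    refine ⟨f, ?_, ?_⟩
    · have cv : ∀ x : ZMod 4, x = 0 ∨ x = 2 ∨ x = 1 ∨ x = 3 := by decide
      intro x
      rcases cv x with rfl | rfl | rfl | rfl
      exacts [⟨a, hfA a ha⟩, ⟨b, hfB b hb⟩, ⟨c, hfC c hc⟩, ⟨d, hfD d hd⟩]
    · intro u v huv
      rcases hcov u with hu | hu | hu | hu <;> rcases hcov v with hv | hv | hv | hv <;>
      first
      | exact absurd huv (hn1 u hu v hv)
      | exact absurd huv.symm (hn1 v hv u hu)
      | exact absurd huv (hn2 u hu v hv)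
      | exact absurd huv.symm (hn2 v hv u hu)
      | (first | rw [hfA u hu] | rw [hfB u hu] | rw [hfC u hu] | rw [hfD u hu]
         first | rw [hfA v hv] | rw [hfB v hv] | rw [hfC v hv] | rw [hfD v hv]
         decide)
end

section
/- Let G be a finite connected simple graph containing two vertices at graph distance at least 3. Then there exists a surjective homomorphism from G to C4^ref. -/
/-- A finite connected graph containing two vertices at distance at least 3 admits a
surjective homomorphism onto the reflexive 4-cycle `C₄^ref`. -/
theorem sHom_C4ref_of_three_le_dist {V : Type*} [Fintype V] (G : SimpleGraph V)
    (hconn : G.Connected) (h : ∃ u v : V, 3 ≤ G.dist u v) :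
    ∃ f : V → ZMod 4, Function.Surjective f ∧
      ∀ u v, G.Adj u v → (f u - f v = 1 ∨ f u - f v = 0 ∨ f u - f v = -1) := by
  obtain ⟨a, b, hab⟩ := h
  have key : ∀ k, k ≤ G.dist a b → ∃ x, G.dist a x = k := by
    intro k hk
    obtain ⟨p, hp⟩ := hconn.exists_walk_length_eq_dist a b
    refine ⟨p.getVert k, ?_⟩
    have h1 := SimpleGraph.dist_le (p.take k)
    have h2 := SimpleGraph.dist_le (p.drop k)
    have h3 := hconn.dist_triangle (u := a) (v := p.getVert k) (w := b)
    rw [SimpleGraph.Walk.take_length] at h1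
    rw [SimpleGraph.Walk.drop_length] at h2
    omega
  refine ⟨fun x => (G.dist a x : ZMod 4), ?_, ?_⟩
  · intro c
    have hc : c.val < 4 := ZMod.val_lt c
    obtain ⟨x, hx⟩ := key c.val (by omega)
    exact ⟨x, by simp [hx]⟩
  · intro u v huv
    have h1 := hconn.dist_triangle (u := a) (v := u) (w := v)
    have h2 := hconn.dist_triangle (u := a) (v := v) (w := u)
    have h3 : G.dist u v = 1 := SimpleGraph.dist_eq_one_iff_adj.2 huv
    have h4 : G.dist v u = 1 := SimpleGraph.dist_eq_one_iff_adj.2 huv.symm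
    have : G.dist a u = G.dist a v + 1 ∨ G.dist a u = G.dist a v ∨ G.dist a v = G.dist a u + 1 := by
      omega
    rcases this with h | h | h
    · left; simp [h]
    · right; left; simp [h]
    · right; right; simp [h]
end

section
/- Let G be a finite connected simple graph in which every two vertices are at graph distance at most 2. Then every surjective homomorphism f from G to C4^ref is a compaction: for all i, j in Z/4 with i − j ≡ 1 or −1 (mod 4), there exists an edge uv of G with f(u) = i and f(v) = j. -/
/-- In a finite connected graph of diameter at most 2, every surjective homomorphism
onto the reflexive 4-cycle `C₄^ref` is a compaction: every non-loop edge of `C₄^ref`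
has a preimage edge. -/
theorem surjHom_C4ref_is_compaction {V : Type*} [Fintype V] (G : SimpleGraph V)
    (hconn : G.Connected) (hdiam : ∀ u v : V, G.dist u v ≤ 2)
    (f : V → ZMod 4) (hsurj : Function.Surjective f)
    (hhom : ∀ u v, G.Adj u v → (f u - f v = 1 ∨ f u - f v = 0 ∨ f u - f v = -1)) :
    ∀ i j : ZMod 4, (i - j = 1 ∨ i - j = -1) →
      ∃ u v : V, G.Adj u v ∧ f u = i ∧ f v = j := by
  intro i j hij
  obtain ⟨u, rfl⟩ := hsurj i
  obtain ⟨v, rfl⟩ := hsurj j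
  obtain ⟨p, hp⟩ := hconn.exists_walk_length_eq_dist u v
  have hl : p.length ≤ 2 := hp ▸ hdiam u v
  clear hp
  have key : ∀ a b c : ZMod 4, (a - b = 1 ∨ a - b = -1) →
      (a - c = 1 ∨ a - c = 0 ∨ a - c = -1) → (c - b = 1 ∨ c - b = 0 ∨ c - b = -1) →
      c = a ∨ c = b := by decide
  have h0 : ¬ ((0 : ZMod 4) = 1 ∨ (0 : ZMod 4) = -1) := by decide
  match p, hl with
  | .nil, _ => rw [sub_self] at hij; exact absurd hij h0
  | .cons h .nil, _ => exact ⟨_, _, h, rfl, rfl⟩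
  | .cons (v := w) h (.cons h' .nil), _ =>
    rcases key _ _ (f w) hij (hhom _ _ h) (hhom _ _ h') with e | e
    · exact ⟨w, v, h', e, rfl⟩
    · exact ⟨u, w, h, rfl, e⟩
  | .cons _ (.cons _ (.cons _ q)), hl =>
    simp only [SimpleGraph.Walk.length_cons] at hl
    omega
end

section
/- Let G be a finite connected simple graph in which every two vertices are at graph distance at most 4, and let C6 be the 6-cycle on vertex set Z/6. Then every surjective homomorphism f from G to C6 is edge-surjective: for all i, j in Z/6 with i − j ≡ 1 or −1 (mod 6), there exists an edge uv of G with f(u) = i and f(v) = j. -/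
theorem aux_step : ∀ i a b : ZMod 6, (a - b = 1 ∨ a - b = -1) →
    ¬ (a = i ∧ b = i - 1) → ¬ (b = i ∧ a = i - 1) → (b - i).val ≤ (a - i).val + 1 := by
  decide

theorem aux_edge {V : Type*} (G : SimpleGraph V)
    (hconn : G.Connected) (hdiam : ∀ u v : V, G.dist u v ≤ 4)
    (f : V → ZMod 6) (hsurj : Function.Surjective f)
    (hhom : ∀ u v, G.Adj u v → (f u - f v = 1 ∨ f u - f v = -1)) (i : ZMod 6) :
    ∃ u v : V, G.Adj u v ∧ f u = i ∧ f v = i - 1 := by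
  by_contra hne
  have hw : ∀ (u v : V) (p : G.Walk u v), (f v - i).val ≤ (f u - i).val + p.length := by
    intro u v p
    induction p with
    | nil => simp
    | cons h p ih =>
      have := aux_step i _ _ (hhom _ _ h) (fun hh => hne ⟨_, _, h, hh⟩)
        (fun hh => hne ⟨_, _, h.symm, hh⟩)
      rw [SimpleGraph.Walk.length_cons]
      omega
  obtain ⟨a, ha⟩ := hsurj i
  obtain ⟨b, hb⟩ := hsurj (i - 1)
  obtain ⟨p, hp⟩ := hconn.exists_walk_length_eq_dist a b
  have h1 := hw a b p
  have h2 := hdiam a b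
  have h3 : ∀ i : ZMod 6, (i - 1 - i).val = 5 ∧ (i - i).val = 0 := by decide
  rw [ha, hb, (h3 i).1, (h3 i).2] at h1
  omega

/-- In a finite connected graph of diameter at most 4, every surjective homomorphism
onto the 6-cycle `C₆` is edge-surjective. -/
theorem surjHom_C6_is_edge_surjective {V : Type*} [Fintype V] (G : SimpleGraph V)
    (hconn : G.Connected) (hdiam : ∀ u v : V, G.dist u v ≤ 4)
    (f : V → ZMod 6) (hsurj : Function.Surjective f)
    (hhom : ∀ u v, G.Adj u v → (f u - f v = 1 ∨ f u - f v = -1)) :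
    ∀ i j : ZMod 6, (i - j = 1 ∨ i - j = -1) →
      ∃ u v : V, G.Adj u v ∧ f u = i ∧ f v = j := by
  intro i j hij
  rcases hij with h | h
  · obtain ⟨u, v, ha, hu, hv⟩ := aux_edge G hconn hdiam f hsurj hhom i
    exact ⟨u, v, ha, hu, by rw [hv, ← h]; ring⟩
  · obtain ⟨u, v, ha, hu, hv⟩ := aux_edge G hconn hdiam f hsurj hhom j
    exact ⟨v, u, ha.symm, by rw [hv]; linear_combination -h, hu⟩
end

section
/- Let r be a binary relation on a set α and s a binary relation on a set β. There exists a surjective homomorphism from r to s if and only if there exist a function c : β → α and a function h : α → β such that: (i) h is a homomorphism from the augmented relation r_c to s, where r_c x y holds iff r x y or there exist b, b' in β with s b b', x = c b and y = c b'; (ii) h is surjective; and (iii) for all b, b' in β with s b b' and b ≠ b', there exist x, y in α with r_c x y, h x = b and h y = b'. -/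
/-- Correctness of the Turing reduction from `sHom(B)` to `Comp(B)`: there is a
surjective homomorphism from `r` to `s` iff there are witnesses `c : β → α` and a
map `h : α → β` such that `h` is a homomorphism from the augmented relation `r_c`
to `s`, `h` is surjective, and `h` is a compaction: every non-loop tuple of `s` has
a preimage under `h` in `r_c`. -/
theorem sHom_iff_comp_of_augmented {α β : Type*} (r : α → α → Prop) (s : β → β → Prop) :
    (∃ h : α → β, Function.Surjective h ∧ ∀ x y, r x y → s (h x) (h y)) ↔
      (∃ c : β → α, ∃ h : α → β,
        (∀ x y, (r x y ∨ ∃ b b' : β, s b b' ∧ x = c b ∧ y = c b') → s (h x) (h y)) ∧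
        Function.Surjective h ∧
        (∀ b b' : β, s b b' → b ≠ b' →
          ∃ x y : α, (r x y ∨ ∃ b2 b2' : β, s b2 b2' ∧ x = c b2 ∧ y = c b2') ∧
            h x = b ∧ h y = b')) := by
  constructor
  · rintro ⟨h, hs, hr⟩
    obtain ⟨c, hc⟩ := hs.hasRightInverse
    refine ⟨c, h, ?_, hs, ?_⟩
    · rintro x y (hxy | ⟨b, b', hb, rfl, rfl⟩)
      · exact hr x y hxy
      · rw [hc b, hc b']
        exact hb
    · intro b b' hb _
      exact ⟨c b, c b', Or.inr ⟨b, b', hb, rfl, rfl⟩, hc b, hc b'⟩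
  · rintro ⟨c, h, hr, hs, _⟩
    exact ⟨h, hs, fun x y hxy => hr x y (Or.inl hxy)⟩
end
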